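/- Let 1 ≤ p < q be integers and a, b ∈ ℤ with gcd(p,q) ∤ (b − a). Applying the construction with (α,β,γ,δ) = (p,a,q,b), the densities d_i exist for all i ∈ ℕ ∪ {∞}, with d_1 = 1 − 1/p − 1/q, d_2 = 1/p, d_i = 0 for every i ≥ 3, and d_∞ = 0; that is, d = (1 − 1/p − 1/q, 1/p, 0̄, 0). -/

import Mathlib

open scoped BigOperators

noncomputable section

/-- The Beatty set `S(τ,η) = {⌊τk+η⌋ : k ∈ ℕ} ∩ ℕ`, viewed as a set of positive integers
(inside `ℤ`).  Here `ℕ` denotes the positive integers, so `k` ranges over `k ≥ 1`. -/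
def BeattySet (τ η : ℝ) : Set ℤ :=
  {x : ℤ | 0 < x ∧ ∃ k : ℕ, 0 < k ∧ ⌊τ * (k : ℝ) + η⌋ = x}

/-- The sets `A_i` (for `1 ≤ i < ∞`) associated to the data `(α,β,γ,δ)` and the map `f`
(which satisfies `f(⌊αk+β⌋) = ⌊γk+δ⌋` for `k ≥ 1`):
`A_1 = ℕ \ (S(α,β) ∪ S(γ,δ))`, and for `i ≥ 2`,
`A_i = {x ∈ S(α,β) \ S(γ,δ) : f^j(x) ∈ S(α,β) ∩ S(γ,δ) for 1 ≤ j ≤ i−2, and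
f^{i−1}(x) ∈ S(γ,δ) \ S(α,β)}`. -/
def ASet (α β γ δ : ℝ) (f : ℤ → ℤ) (i : ℕ) : Set ℤ :=
  if i = 1 then {x : ℤ | 0 < x} \ (BeattySet α β ∪ BeattySet γ δ)
  else (BeattySet α β \ BeattySet γ δ) ∩
    {x : ℤ | (∀ j : ℕ, 1 ≤ j → j ≤ i - 2 → f^[j] x ∈ BeattySet α β ∩ BeattySet γ δ) ∧
      f^[i - 1] x ∈ BeattySet γ δ \ BeattySet α β}

/-- The set `A_∞ = {x ∈ S(α,β) \ S(γ,δ) : f^j(x) ∈ S(α,β) ∩ S(γ,δ) for all j ≥ 1}`. -/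
def AInf (α β γ δ : ℝ) (f : ℤ → ℤ) : Set ℤ :=
  (BeattySet α β \ BeattySet γ δ) ∩
    {x : ℤ | ∀ j : ℕ, 1 ≤ j → f^[j] x ∈ BeattySet α β ∩ BeattySet γ δ}

/-- `A` has (Banach) density `d`: the limit of `|A ∩ [n₁,n₂]| / (n₂ − n₁)` as `n₂ − n₁ → ∞`
over intervals `[n₁,n₂]` of positive integers exists and equals `d`. -/
def HasBanachDensity (A : Set ℤ) (d : ℝ) : Prop :=
  ∀ ε : ℝ, 0 < ε → ∃ N : ℕ, ∀ n₁ n₂ : ℕ, 0 < n₁ → n₁ + N ≤ n₂ →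
    |((A ∩ Set.Icc (n₁ : ℤ) (n₂ : ℤ)).ncard : ℝ) / ((n₂ : ℝ) - (n₁ : ℝ)) - d| < ε

end

/-!
A disjoint pair of Beatty sets has no chain of length greater than two: if `S(α,β)` and `S(γ,δ)`
do not meet, then every condition `f^j(x) ∈ S(α,β) ∩ S(γ,δ)` fails, so `A_i = ∅` for `i ≥ 3` and
`A_∞ = ∅`, while `x ∈ S(α,β)` lies in `A_2` as soon as `f(x)` is positive, which excludes only
finitely many `x`. The densities thus reduce to the density `1/τ` of a single Beatty set
`S(τ,η)` with `τ ≥ 1`. Integer parameters with `gcd(p,q) ∤ b - a` give disjoint sets, since a common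
element would be congruent to both `a` and `b` modulo `gcd(p,q)`.
-/

open Set

section Density

variable {A B : Set ℤ} {d e : ℝ}

theorem hasBanachDensity_of_abs_sub_le (C : ℝ)
    (h : ∀ n₁ n₂ : ℕ, 0 < n₁ → n₁ ≤ n₂ →
      |((A ∩ Icc (n₁ : ℤ) n₂).ncard : ℝ) - d * ((n₂ : ℝ) - n₁)| ≤ C) :
    HasBanachDensity A d := by
  intro ε hε
  obtain ⟨N, hN⟩ := exists_nat_gt (C / ε)
  refine ⟨N + 1, fun n₁ n₂ hn₁ hn => ?_⟩
  have hlen : (N : ℝ) + 1 ≤ (n₂ : ℝ) - n₁ := by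
    rw [le_sub_iff_add_le']
    exact_mod_cast hn
  have hpos : (0 : ℝ) < (n₂ : ℝ) - n₁ := lt_of_lt_of_le (by positivity) hlen
  rw [div_sub' hpos.ne', abs_div, abs_of_pos hpos, div_lt_iff₀ hpos, mul_comm _ d]
  calc |((A ∩ Icc (n₁ : ℤ) n₂).ncard : ℝ) - d * ((n₂ : ℝ) - n₁)|
      ≤ C := h n₁ n₂ hn₁ (by omega)
    _ < ε * N := (div_lt_iff₀' hε).1 hN
    _ ≤ ε * ((n₂ : ℝ) - n₁) := by gcongr; linarith

theorem HasBanachDensity.sdiff (hA : HasBanachDensity A d) (hB : HasBanachDensity B e)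
    (hBA : B ⊆ A) : HasBanachDensity (A \ B) (d - e) := by
  intro ε hε
  obtain ⟨M, hM⟩ := hA (ε / 2) (half_pos hε)
  obtain ⟨N, hN⟩ := hB (ε / 2) (half_pos hε)
  refine ⟨max M N, fun n₁ n₂ hn₁ hn => ?_⟩
  have hcard : (((A \ B) ∩ Icc (n₁ : ℤ) n₂).ncard : ℝ) =
      (A ∩ Icc (n₁ : ℤ) n₂).ncard - (B ∩ Icc (n₁ : ℤ) n₂).ncard := by
    rw [inter_sdiff_distrib_right, eq_sub_iff_add_eq]
    exact_mod_cast ncard_sdiff_add_ncard_of_subset (inter_subset_inter_left _ hBA)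
      ((finite_Icc _ _).inter_of_right _)
  rw [hcard, sub_div, sub_sub_sub_comm]
  calc _ ≤ _ := abs_sub _ _
    _ < ε / 2 + ε / 2 := add_lt_add (hM n₁ n₂ hn₁ (by omega)) (hN n₁ n₂ hn₁ (by omega))
    _ = ε := add_halves ε

theorem hasBanachDensity_zero_of_bddAbove (hA : BddAbove A) : HasBanachDensity A 0 := by
  obtain ⟨M, hM⟩ := hA
  refine hasBanachDensity_of_abs_sub_le (Icc 0 M).ncard fun n₁ n₂ _ _ => ?_
  rw [zero_mul, sub_zero, Nat.abs_cast, Nat.cast_le]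
  exact ncard_le_ncard (fun x hx => ⟨n₁.cast_nonneg.trans hx.2.1, hM hx.1⟩) (finite_Icc _ _)

theorem HasBanachDensity.of_bddAbove_sdiff (hA : HasBanachDensity A d) (hBA : B ⊆ A)
    (h : BddAbove (A \ B)) : HasBanachDensity B d := by
  simpa only [sdiff_sdiff_cancel_left hBA, sub_zero] using
    hA.sdiff (hasBanachDensity_zero_of_bddAbove h) sdiff_subset

end Density

section Beatty

variable {τ η : ℝ}

theorem floor_mul_add_strictMono (hτ : 1 ≤ τ) (η : ℝ) :
    StrictMono fun k : ℤ => ⌊τ * k + η⌋ := by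
  refine strictMono_int_of_lt_succ fun k => Int.lt_iff_add_one_le.2 (Int.le_floor.2 ?_)
  have hfloor := Int.floor_le (τ * k + η)
  push_cast
  linarith

theorem preimage_floor_mul_add_Icc (hτ : 0 < τ) (η : ℝ) (m n : ℤ) :
    (fun k : ℤ => ⌊τ * k + η⌋) ⁻¹' Icc m n = Ico ⌈(m - η) / τ⌉ ⌈(n + 1 - η) / τ⌉ := by
  ext k
  simp only [mem_preimage, mem_Icc, mem_Ico, Int.le_floor, Int.floor_le_iff, Int.ceil_le,
    Int.lt_ceil, div_le_iff₀' hτ, lt_div_iff₀' hτ, sub_le_iff_le_add, lt_sub_iff_add_lt]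

theorem hasBanachDensity_range_floor (hτ : 1 ≤ τ) (η : ℝ) :
    HasBanachDensity (range fun k : ℤ => ⌊τ * k + η⌋) (1 / τ) := by
  have hτ0 : 0 < τ := one_pos.trans_le hτ
  refine hasBanachDensity_of_abs_sub_le (1 + 1 / τ) fun m n _ hmn => ?_
  set u : ℝ := (m - η) / τ with hu
  set v : ℝ := (n + 1 - η) / τ with hv
  have huv : v - u = 1 / τ * ((n : ℝ) - m) + 1 / τ := by
    rw [hu, hv]
    ring
  have hle : u ≤ v := by
    have hmn' : (m : ℝ) ≤ n := by exact_mod_cast hmn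
    rw [hu, hv]
    gcongr
    linarith
  have hcard : (((range fun k : ℤ => ⌊τ * k + η⌋) ∩ Icc (m : ℤ) n).ncard : ℝ) = ⌈v⌉ - ⌈u⌉ := by
    rw [← image_preimage_eq_range_inter, ncard_image_of_injective _
      (floor_mul_add_strictMono hτ η).injective, preimage_floor_mul_add_Icc hτ0,
      ← Finset.coe_Ico, ncard_coe_finset, Int.card_Ico, Int.cast_natCast, Int.cast_natCast,
      ← hu, ← hv, ← Int.cast_natCast, Int.toNat_of_nonneg (sub_nonneg.2 (Int.ceil_mono hle)),
      Int.cast_sub]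
  have hinv : 0 < 1 / τ := one_div_pos.2 hτ0
  rw [hcard, abs_le]
  constructor <;>
    linarith [Int.le_ceil u, Int.ceil_lt_add_one u, Int.le_ceil v, Int.ceil_lt_add_one v]

theorem hasBanachDensity_beattySet (hτ : 1 ≤ τ) (η : ℝ) :
    HasBanachDensity (BeattySet τ η) (1 / τ) := by
  refine (hasBanachDensity_range_floor hτ η).of_bddAbove_sdiff ?_ ⟨max 0 ⌊τ * (0 : ℤ) + η⌋, ?_⟩
  · rintro x ⟨_, k, _, rfl⟩
    exact ⟨k, by simp only [Int.cast_natCast]⟩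
  · rintro _ ⟨⟨k, rfl⟩, hk⟩
    by_contra! hlt
    obtain ⟨hpos, hlt⟩ := max_lt_iff.1 hlt
    have hk0 : 0 < k := (floor_mul_add_strictMono hτ η).lt_iff_lt.1 hlt
    lift k to ℕ using hk0.le
    exact hk ⟨hpos, k, by exact_mod_cast hk0, by simp only [Int.cast_natCast]⟩

theorem beattySet_one_zero : BeattySet 1 0 = Ioi 0 := by
  ext x
  refine ⟨fun hx => hx.1, fun hx => ⟨hx, x.toNat, by simpa using hx, ?_⟩⟩
  simp [le_of_lt (mem_Ioi.1 hx)]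

theorem hasBanachDensity_Ioi_zero : HasBanachDensity (Ioi 0) 1 := by
  simpa only [beattySet_one_zero, div_one] using hasBanachDensity_beattySet le_rfl 0

theorem modEq_of_mem_beattySet {p : ℕ} {a x : ℤ} (hx : x ∈ BeattySet p a) :
    x ≡ a [ZMOD p] := by
  obtain ⟨_, k, _, rfl⟩ := hx
  have hfloor : ⌊(p : ℝ) * k + a⌋ = p * k + a := by
    exact_mod_cast Int.floor_intCast (R := ℝ) (p * k + a)
  rw [hfloor]
  exact Int.modEq_iff_dvd.2 ⟨-k, by ring⟩

theorem disjoint_beattySet_of_not_gcd_dvd {p q : ℕ} {a b : ℤ}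
    (h : ¬ (Nat.gcd p q : ℤ) ∣ b - a) : Disjoint (BeattySet p a) (BeattySet q b) := by
  refine disjoint_left.2 fun x hp hq => h (Int.modEq_iff_dvd.1 (.trans (b := x) ?_ ?_))
  · exact (modEq_of_mem_beattySet hp).symm.of_dvd (mod_cast Nat.gcd_dvd_left p q)
  · exact (modEq_of_mem_beattySet hq).of_dvd (mod_cast Nat.gcd_dvd_right p q)

end Beatty

section Disjoint

variable {α β γ δ : ℝ} {f : ℤ → ℤ}

theorem aSet_one : ASet α β γ δ f 1 = (Ioi 0 \ BeattySet α β) \ BeattySet γ δ := by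
  rw [ASet, if_pos rfl, sdiff_sdiff]
  rfl

theorem aSet_two_of_disjoint (h : Disjoint (BeattySet α β) (BeattySet γ δ)) :
    ASet α β γ δ f 2 = BeattySet α β ∩ f ⁻¹' BeattySet γ δ := by
  rw [ASet, if_neg (by decide), h.sdiff_eq_left, h.symm.sdiff_eq_left]
  ext x
  simp only [mem_inter_iff, mem_ofPred_eq, mem_preimage, Nat.sub_self, Nat.add_one_sub_one,
    Function.iterate_one, and_congr_right_iff, and_iff_right_iff_imp]
  omega

theorem aSet_eq_empty_of_disjoint (h : Disjoint (BeattySet α β) (BeattySet γ δ)) {i : ℕ}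
    (hi : 3 ≤ i) : ASet α β γ δ f i = ∅ := by
  rw [ASet, if_neg (by omega)]
  exact eq_empty_of_forall_notMem fun x hx =>
    h.notMem_of_mem_left (hx.2.1 1 le_rfl (by omega)).1 (hx.2.1 1 le_rfl (by omega)).2

theorem aInf_eq_empty_of_disjoint (h : Disjoint (BeattySet α β) (BeattySet γ δ)) :
    AInf α β γ δ f = ∅ :=
  eq_empty_of_forall_notMem fun _ hx =>
    h.notMem_of_mem_left (hx.2 1 le_rfl).1 (hx.2 1 le_rfl).2

theorem bddAbove_beattySet_sdiff_preimage (hα : 0 ≤ α) (hγ : 0 < γ)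
    (hf : ∀ k : ℕ, 0 < k → f ⌊α * k + β⌋ = ⌊γ * k + δ⌋) :
    BddAbove (BeattySet α β \ (BeattySet α β ∩ f ⁻¹' BeattySet γ δ)) := by
  refine ⟨⌊α * ((1 - δ) / γ) + β⌋, ?_⟩
  rintro _ ⟨⟨hpos, k, hk, rfl⟩, hx⟩
  have hfx : ⌊γ * k + δ⌋ ≤ 0 := by
    by_contra! hpos'
    refine hx ⟨⟨hpos, k, hk, rfl⟩, ?_⟩
    rw [mem_preimage, hf k hk]
    exact ⟨hpos', k, hk, rfl⟩
  have hlt : γ * k + δ < 1 := by simpa using Int.floor_le_iff.1 hfx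
  have hk_le : (k : ℝ) ≤ (1 - δ) / γ := (le_div_iff₀' hγ).2 (by linarith)
  exact Int.floor_mono (by gcongr)

theorem densities_integer_case_eight_general (hα : 1 ≤ α) (hγ : 1 ≤ γ)
    (hdisj : Disjoint (BeattySet α β) (BeattySet γ δ))
    (hf : ∀ k : ℕ, 0 < k → f ⌊α * k + β⌋ = ⌊γ * k + δ⌋) :
    HasBanachDensity (ASet α β γ δ f 1) (1 - 1 / α - 1 / γ) ∧
      HasBanachDensity (ASet α β γ δ f 2) (1 / α) ∧
      (∀ i : ℕ, 3 ≤ i → HasBanachDensity (ASet α β γ δ f i) 0) ∧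
      HasBanachDensity (AInf α β γ δ f) 0 := by
  have hα_density := hasBanachDensity_beattySet hα β
  have hγ_density := hasBanachDensity_beattySet hγ δ
  have hempty : HasBanachDensity ∅ 0 := hasBanachDensity_zero_of_bddAbove bddAbove_empty
  refine ⟨?_, ?_, fun i hi => ?_, ?_⟩
  · rw [aSet_one]
    exact (hasBanachDensity_Ioi_zero.sdiff hα_density fun _ hx => hx.1).sdiff hγ_density
      fun _ hx => ⟨hx.1, hdisj.notMem_of_mem_right hx⟩
  · rw [aSet_two_of_disjoint hdisj]
    exact hα_density.of_bddAbove_sdiff inter_subset_left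
      (bddAbove_beattySet_sdiff_preimage (by linarith) (by linarith) hf)
  · rwa [aSet_eq_empty_of_disjoint hdisj hi]
  · rwa [aInf_eq_empty_of_disjoint hdisj]

end Disjoint

/-- **Corollary, region ⟨8⟩.** Let `1 ≤ p < q` be integers and `a, b ∈ ℤ`
with `gcd(p,q) ∤ (b − a)`.  With `(α,β,γ,δ) = (p,a,q,b)`, the densities exist, with
`d_1 = 1 − 1/p − 1/q`, `d_2 = 1/p`, `d_i = 0` for `i ≥ 3`, and `d_∞ = 0`. -/
theorem densities_integer_case_eight (p q : ℕ) (hp : 1 ≤ p) (hpq : p < q) (a b : ℤ)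
    (hndvd : ¬ ((Nat.gcd p q : ℤ) ∣ (b - a))) (f : ℤ → ℤ)
    (hf : ∀ k : ℕ, 0 < k →
      f ⌊(p : ℝ) * (k : ℝ) + (a : ℝ)⌋ = ⌊(q : ℝ) * (k : ℝ) + (b : ℝ)⌋) :
    HasBanachDensity (ASet (p : ℝ) (a : ℝ) (q : ℝ) (b : ℝ) f 1)
        (1 - 1 / (p : ℝ) - 1 / (q : ℝ)) ∧
      HasBanachDensity (ASet (p : ℝ) (a : ℝ) (q : ℝ) (b : ℝ) f 2) (1 / (p : ℝ)) ∧
      (∀ i : ℕ, 3 ≤ i → HasBanachDensity (ASet (p : ℝ) (a : ℝ) (q : ℝ) (b : ℝ) f i) 0) ∧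
      HasBanachDensity (AInf (p : ℝ) (a : ℝ) (q : ℝ) (b : ℝ) f) 0 := by
  exact densities_integer_case_eight_general (by exact_mod_cast hp)
    (by exact_mod_cast hp.trans hpq.le) (disjoint_beattySet_of_not_gcd_dvd hndvd) hf
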